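/- Suppose the vectors F_1, …, F_m span a subspace N ⊆ (n → K) and have pivots p_1, …, p_m such that p_l ∈ H whenever supp_H(F_l) ≠ ∅. Then for every j there is no F ∈ N with ∅ ≠ supp_H(F) ⊊ supp_H(F_j); in particular every nonempty set supp_H(F_j) is N-primitive. (First claim in the proof of the paper's Lemma [lm:Mrref]: the set of horizontal nodes crossed by an element of the rref basis of defining equations is M-primitive.) -/

import Mathlib

/-- The set `supp_H(F) = {h ∈ H : F h ≠ 0}` of elements of `H` "crossed" by `F`. -/
def suppH {K n : Type*} [Field K] (H : Set n) (F : n → K) : Set n :=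
  {h | h ∈ H ∧ F h ≠ 0}

/-- A nonempty set `S ⊆ H` is `N`-correlated if `S = supp_H(F)` for some `F ∈ N`. -/
def Correlated {K n : Type*} [Field K] (N : Submodule K (n → K)) (H : Set n)
    (S : Set n) : Prop :=
  S.Nonempty ∧ ∃ F ∈ N, S = suppH H F

/-- An `N`-correlated set is `N`-primitive if no nonempty proper subset is `N`-correlated. -/
def Primitive {K n : Type*} [Field K] (N : Submodule K (n → K)) (H : Set n)
    (S : Set n) : Prop :=
  Correlated N H S ∧ ∀ S' : Set n, S' ⊂ S → S'.Nonempty → ¬ Correlated N H S'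

/-!
The coefficient of `F l` in an element `G` of the span is `G (p l) / F l (p l)`. If
`suppH H G ⊆ suppH H (F j)`, then `G` vanishes at every pivot `p k ∈ H` with `k ≠ j`, since `F j`
does; hence every `F k` with `k ≠ j` either has coefficient zero in `G` or is identically zero
on `H`. So `G` is a multiple of `F j` on `H`, and its `H`-support is empty or all of that of `F j`.
-/

/-- The vectors `F l` have pivots `p l`, as in a reduced row echelon form up to scaling the rows:
among the vectors of the family, only `F l` is nonzero at the position `p l`. -/
structure HasPivots {ι n R : Type*} [Zero R] (F : ι → n → R) (p : ι → n) : Prop where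
  apply_ne_zero : ∀ l, F l (p l) ≠ 0
  apply_eq_zero : ∀ k l, k ≠ l → F k (p l) = 0

section LinearCombination

variable {ι n R : Type*} [Semiring R] {F : ι → n → R} {p : ι → n}

theorem linearCombination_apply_of_forall_ne {c : ι →₀ R} {j : ι} {x : n}
    (h : ∀ k, k ≠ j → c k * F k x = 0) :
    Finsupp.linearCombination R F c x = c j * F j x := by
  rw [Finsupp.linearCombination_apply, Finsupp.sum, Finset.sum_apply]
  exact Finset.sum_eq_single j (fun k _ hk ↦ h k hk) fun hj ↦ by
    simp [Finsupp.notMem_support_iff.mp hj]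

theorem HasPivots.linearCombination_apply_pivot (hF : HasPivots F p) (c : ι →₀ R) (l : ι) :
    Finsupp.linearCombination R F c (p l) = c l * F l (p l) :=
  linearCombination_apply_of_forall_ne fun k hk ↦ by rw [hF.apply_eq_zero k l hk, mul_zero]

theorem HasPivots.coeff_eq_zero [NoZeroDivisors R] (hF : HasPivots F p) {c : ι →₀ R} {l : ι}
    (h : Finsupp.linearCombination R F c (p l) = 0) : c l = 0 := by
  rw [hF.linearCombination_apply_pivot] at h
  exact (mul_eq_zero.mp h).resolve_right (hF.apply_ne_zero l)

end LinearCombination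

section SuppH

variable {ι n K : Type*} [Field K] {H : Set n}

theorem suppH_congr {F G : n → K} (h : Set.EqOn F G H) : suppH H F = suppH H G :=
  Set.ext fun _ ↦ and_congr_right fun hx ↦ by rw [h hx]

theorem suppH_smul {a : K} (ha : a ≠ 0) (F : n → K) : suppH H (a • F) = suppH H F := by
  ext x
  simp [suppH, ha]

theorem suppH_zero : suppH H (0 : n → K) = ∅ := by
  simp [suppH]

variable {F : ι → n → K} {p : ι → n}

theorem HasPivots.exists_eqOn_smul_of_suppH_subset (hF : HasPivots F p)
    (hpH : ∀ l, (suppH H (F l)).Nonempty → p l ∈ H) {G : n → K}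
    (hG : G ∈ Submodule.span K (Set.range F)) {j : ι} (hGj : suppH H G ⊆ suppH H (F j)) :
    ∃ a : K, Set.EqOn G (a • F j) H := by
  obtain ⟨c, rfl⟩ := Finsupp.mem_span_range_iff_exists_finsupp.mp hG
  have coeff_eq_zero {k : ι} (hkj : k ≠ j) (hk : (suppH H (F k)).Nonempty) : c k = 0 := by
    refine hF.coeff_eq_zero (of_not_not fun hne ↦ ?_)
    exact (hGj ⟨hpH k hk, hne⟩).2 (hF.apply_eq_zero j k hkj.symm)
  refine ⟨c j, fun x hx ↦ linearCombination_apply_of_forall_ne fun k hkj ↦ ?_⟩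
  by_cases hkx : F k x = 0
  · rw [hkx, mul_zero]
  · rw [coeff_eq_zero hkj ⟨x, hx, hkx⟩, zero_mul]

theorem HasPivots.suppH_eq_of_subset (hF : HasPivots F p)
    (hpH : ∀ l, (suppH H (F l)).Nonempty → p l ∈ H) {G : n → K}
    (hG : G ∈ Submodule.span K (Set.range F)) {j : ι} (hne : (suppH H G).Nonempty)
    (hGj : suppH H G ⊆ suppH H (F j)) : suppH H G = suppH H (F j) := by
  obtain ⟨a, ha⟩ := hF.exists_eqOn_smul_of_suppH_subset hpH hG hGj
  have ha₀ : a ≠ 0 := by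
    rintro rfl
    rw [suppH_congr ha, zero_smul, suppH_zero] at hne
    exact Set.not_nonempty_empty hne
  rw [suppH_congr ha, suppH_smul ha₀]

end SuppH

theorem rref_supp_primitive_general {ι n K : Type*} [Field K] (H : Set n)
    {F : ι → n → K} {p : ι → n} (hF : HasPivots F p) (N : Submodule K (n → K))
    (hN : N = Submodule.span K (Set.range F))
    (hpH : ∀ l, (suppH H (F l)).Nonempty → p l ∈ H) :
    (∀ j, ¬ ∃ F' ∈ N, (suppH H F').Nonempty ∧ suppH H F' ⊂ suppH H (F j)) ∧
    (∀ j, (suppH H (F j)).Nonempty → Primitive N H (suppH H (F j))) := by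
  subst hN
  have minimal (j : ι) : ¬ ∃ F' ∈ Submodule.span K (Set.range F),
      (suppH H F').Nonempty ∧ suppH H F' ⊂ suppH H (F j) := by
    rintro ⟨G, hG, hne, hGj⟩
    exact hGj.ne (hF.suppH_eq_of_subset hpH hG hne hGj.subset)
  refine ⟨minimal, fun j hj ↦ ⟨⟨hj, F j, Submodule.mem_span_of_mem ⟨j, rfl⟩, rfl⟩, ?_⟩⟩
  rintro _ hGj hne ⟨-, G, hG, rfl⟩
  exact minimal j ⟨G, hG, hne, hGj⟩

/-- First claim in the proof of Lemma `lm:Mrref`: if `F_1, …, F_m` span `N` and have pivots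
`p_1, …, p_m` with `p_l ∈ H` whenever `supp_H(F_l) ≠ ∅`, then for every `j` there is no
`F ∈ N` with `∅ ≠ supp_H(F) ⊊ supp_H(F_j)`; in particular every nonempty `supp_H(F_j)` is
`N`-primitive. -/
theorem rref_supp_primitive {K n : Type*} [Field K] [Fintype n]
    (H : Set n) {m : ℕ}
    (F : Fin m → (n → K)) (p : Fin m → n)
    (hpiv : ∀ l, F l (p l) ≠ 0)
    (hpiv' : ∀ k l, k ≠ l → F k (p l) = 0)
    (N : Submodule K (n → K))
    (hN : N = Submodule.span K (Set.range F))
    (hpH : ∀ l, (suppH H (F l)).Nonempty → p l ∈ H) :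
    (∀ j : Fin m, ¬ ∃ F' ∈ N, (suppH H F').Nonempty ∧ suppH H F' ⊂ suppH H (F j)) ∧
    (∀ j : Fin m, (suppH H (F j)).Nonempty → Primitive N H (suppH H (F j))) :=
  rref_supp_primitive_general H ⟨hpiv, hpiv'⟩ N hN hpH
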